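/- arXiv:1811.04844 — 3 statements merged into one kernel-verified Lean document; each statement's English description precedes it below -/
import Mathlib

section
/- For every integer n ≥ 1 and every x ∈ (-1,1), the principal-value integral (1/π) p.v. ∫_{-1}^{1} √(1−y²)·U_{n−1}(y) / (x−y) dy equals T_n(x), where T_n and U_n are the Chebyshev polynomials of the first and second kind. -/
open MeasureTheory Real Filter Topology Set

/-- Chebyshev polynomial of the first kind, `T_k`, evaluated at a real number. -/
noncomputable def chebT (k : ℕ) (x : ℝ) : ℝ := (Polynomial.Chebyshev.T ℝ k).eval x

/-- Chebyshev polynomial of the second kind, `U_k`, evaluated at a real number. -/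
noncomputable def chebU (k : ℕ) (x : ℝ) : ℝ := (Polynomial.Chebyshev.U ℝ k).eval x

/-- `HasHilbertTransform f x L` means the Hilbert transform
`Hf(x) = (1/π) · p.v. ∫ f(y)/(x−y) dy` exists and equals `L`, the principal value
being the limit as `ε → 0⁺` of the integral over `{y : |x−y| > ε}`. -/
def HasHilbertTransform (f : ℝ → ℝ) (x L : ℝ) : Prop :=
  Tendsto (fun ε : ℝ => (1 / π) * ∫ y in {y : ℝ | ε < |x - y|}, f y / (x - y))
    (𝓝[>] 0) (𝓝 L)

/-!
Let `H` be the Hilbert transform and `w y = 1 / √(1 - y²)` on `(-1, 1)`. The truncated integrals of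
`w y / (x - y)` have an elementary closed form, from which `H w = 0` on `(-1, 1)`. Writing
`y = x - (x - y)` gives `H (y f) (x) = x (H f) (x) - (1/π) ∫ f`, so the orthogonality
`∫ T_n w = 0` (`n ≥ 1`) turns the three-term recurrence of `T_n` into that of the transforms,
whence `H (T_n w) = -U_{n-1}`. Finally `√(1 - y²) U_n = (T_n - T_{n+2}) w / 2` is transformed into
`(U_{n+1} - U_{n-1}) / 2 = T_{n+1}`.
-/

section Truncation

variable {a b x ε : ℝ}

lemma measurableSet_lt_abs_sub (x ε : ℝ) : MeasurableSet {y : ℝ | ε < |x - y|} :=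
  measurableSet_lt measurable_const (by fun_prop)

lemma aecover_lt_abs_sub (x : ℝ) :
    AECover volume (𝓝[>] 0) fun ε : ℝ => {y : ℝ | ε < |x - y|} where
  ae_eventually_mem := by
    filter_upwards [compl_mem_ae_iff.2 (measure_singleton x)] with y hy
    have hpos : 0 < |x - y| := abs_pos.2 (sub_ne_zero.2 (Ne.symm hy))
    filter_upwards [Ioo_mem_nhdsGT hpos] with ε hε using hε.2
  measurableSet := measurableSet_lt_abs_sub x

lemma integrableOn_div_sub_of_integrable {f : ℝ → ℝ} (hf : Integrable f) (hε : 0 < ε) :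
    IntegrableOn (fun y => f y / (x - y)) {y : ℝ | ε < |x - y|} := by
  have hbound : ∀ᵐ y ∂volume.restrict {y : ℝ | ε < |x - y|}, ‖(x - y)⁻¹‖ ≤ ε⁻¹ := by
    filter_upwards [ae_restrict_mem (measurableSet_lt_abs_sub x ε)] with y hy
    rw [norm_inv, Real.norm_eq_abs]
    exact inv_anti₀ hε (le_of_lt hy)
  simpa only [IntegrableOn, div_eq_mul_inv] using hf.integrableOn.mul_bdd (by fun_prop) hbound

lemma setIntegral_lt_abs_sub_eq_add {E : Type*} [NormedAddCommGroup E] [NormedSpace ℝ E]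
    {f : ℝ → E} (hε : 0 ≤ ε) (ha : a ≤ x - ε) (hb : x + ε ≤ b)
    (hf : IntegrableOn f {y : ℝ | ε < |x - y|}) (hzero : ∀ y ∉ Ioo a b, f y = 0) :
    ∫ y in {y : ℝ | ε < |x - y|}, f y = (∫ y in a..(x - ε), f y) + ∫ y in (x + ε)..b, f y := by
  have hleft : Ioo a (x - ε) ⊆ {y : ℝ | ε < |x - y|} :=
    fun y hy => lt_abs.2 (Or.inl (lt_sub_comm.1 hy.2))
  have hright : Ioo (x + ε) b ⊆ {y : ℝ | ε < |x - y|} :=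
    fun y hy => lt_abs.2 (Or.inr ((lt_sub_iff_add_lt'.2 hy.1).trans_eq (neg_sub x y).symm))
  have hdisj : Disjoint (Ioo a (x - ε)) (Ioo (x + ε) b) :=
    Set.disjoint_left.2 fun y hy hy' => by linarith [hy.2, hy'.1]
  have houter : ∀ y ∈ {y : ℝ | ε < |x - y|} \ (Ioo a (x - ε) ∪ Ioo (x + ε) b), f y = 0 := by
    rintro y ⟨hy : ε < |x - y|, hyU⟩
    refine hzero y fun hyab => hyU ?_
    rcases lt_abs.1 hy with h | h
    · exact Or.inl ⟨hyab.1, by linarith⟩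
    · exact Or.inr ⟨by linarith, hyab.2⟩
  rw [setIntegral_eq_of_subset_of_forall_sdiff_eq_zero (measurableSet_lt_abs_sub x ε)
      (union_subset hleft hright) houter,
    setIntegral_union hdisj measurableSet_Ioo (hf.mono_set hleft) (hf.mono_set hright),
    intervalIntegral.integral_of_le ha, intervalIntegral.integral_of_le hb,
    integral_Ioc_eq_integral_Ioo, integral_Ioc_eq_integral_Ioo]

end Truncation

namespace HasHilbertTransform

variable {f g : ℝ → ℝ} {x L M : ℝ}

lemma const_mul (c : ℝ) (hf : HasHilbertTransform f x L) :
    HasHilbertTransform (fun y => c * f y) x (c * L) := by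
  refine (Tendsto.const_mul c hf).congr fun ε => ?_
  simp only [mul_div_assoc, integral_const_mul, mul_left_comm]

lemma sub (hf : HasHilbertTransform f x L) (hg : HasHilbertTransform g x M)
    (hfi : Integrable f) (hgi : Integrable g) :
    HasHilbertTransform (fun y => f y - g y) x (L - M) := by
  refine (Tendsto.sub hf hg).congr' ?_
  filter_upwards [self_mem_nhdsWithin] with ε hε
  rw [← mul_sub, ← integral_sub (integrableOn_div_sub_of_integrable hfi hε)
    (integrableOn_div_sub_of_integrable hgi hε)]
  simp only [sub_div]

lemma id_mul (hf : HasHilbertTransform f x L) (hfi : Integrable f) :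
    HasHilbertTransform (fun y => y * f y) x (x * L - (1 / π) * ∫ y, f y) := by
  have hmass := (aecover_lt_abs_sub x).integral_tendsto_of_countably_generated hfi
  refine ((Tendsto.const_mul x hf).sub (hmass.const_mul (1 / π))).congr' ?_
  filter_upwards [self_mem_nhdsWithin] with ε (hε : 0 < ε)
  rw [mul_left_comm, ← mul_sub, ← integral_const_mul,
    ← integral_sub ((integrableOn_div_sub_of_integrable hfi hε).const_mul x) hfi.integrableOn]
  congr 1
  refine setIntegral_congr_fun (measurableSet_lt_abs_sub x ε) fun y hy => ?_
  have hxy : x - y ≠ 0 := abs_pos.1 (hε.trans hy)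
  field_simp
  ring

end HasHilbertTransform

/-- The weight `1 / √(1 - y²)` for which the `chebT k` are orthogonal on `(-1, 1)`. Since square
roots of nonpositive reals and the inverse of `0` are `0`, it vanishes outside `(-1, 1)`. -/
noncomputable def chebWeight (y : ℝ) : ℝ := √(1 - y ^ 2)⁻¹

section ChebWeight

variable {f : ℝ → ℝ} {y : ℝ}

lemma chebWeight_eq_zero (hy : y ∉ Ioo (-1 : ℝ) 1) : chebWeight y = 0 := by
  rw [mem_Ioo, ← abs_lt, ← sq_lt_one_iff_abs_lt_one, not_lt] at hy
  exact Real.sqrt_eq_zero'.2 (inv_nonpos.2 (sub_nonpos.2 hy))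

lemma integrable_mul_chebWeight (hf : ContinuousOn f (Icc (-1) 1)) :
    Integrable fun y => f y * chebWeight y := by
  rw [← uIcc_of_le (by norm_num)] at hf
  have hIoo := Polynomial.Chebyshev.intervalIntegrable_sqrt_one_sub_sq_inv.continuousOn_mul hf
  rw [intervalIntegrable_iff_integrableOn_Ioo_of_le (by norm_num)] at hIoo
  exact hIoo.integrable_of_forall_notMem_eq_zero fun y hy =>
    mul_eq_zero_of_right _ (chebWeight_eq_zero hy)

lemma integrable_chebWeight : Integrable chebWeight := by
  simpa only [one_mul] using integrable_mul_chebWeight (f := fun _ => 1) continuousOn_const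

lemma integral_mul_chebWeight (f : ℝ → ℝ) :
    ∫ y, f y * chebWeight y = ∫ y, f y ∂Polynomial.Chebyshev.measureT := by
  rw [Polynomial.Chebyshev.integral_measureT, intervalIntegral.integral_of_le (by norm_num)]
  refine (setIntegral_eq_integral_of_forall_compl_eq_zero fun y hy => ?_).symm
  exact mul_eq_zero_of_right _ (chebWeight_eq_zero fun h => hy (Ioo_subset_Ioc_self h))

lemma one_sub_sq_mul_chebWeight (y : ℝ) : (1 - y ^ 2) * chebWeight y = √(1 - y ^ 2) := by
  rw [chebWeight, Real.sqrt_inv, ← div_eq_mul_inv, Real.div_sqrt]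

end ChebWeight

/-- A primitive of `fun y => chebWeight y / (x - y)` on each component of `(-1, 1) \ {x}`: with
`x = cos θ` and `y = cos φ` it is `(1 / sin θ) log |sin ((θ + φ) / 2) / sin ((θ - φ) / 2)|`.
No absolute value is taken because `Real.log` is even. -/
noncomputable def chebWeightPrimitive (x y : ℝ) : ℝ :=
  (√(1 - x ^ 2))⁻¹ * (log (1 - x * y + √(1 - x ^ 2) * √(1 - y ^ 2)) - log (x - y))

section ChebWeightPrimitive

variable {a b x y : ℝ}

@[simp]
lemma chebWeightPrimitive_one (x : ℝ) : chebWeightPrimitive x 1 = 0 := by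
  simp [chebWeightPrimitive, ← Real.log_neg_eq_log (x - 1)]

@[simp]
lemma chebWeightPrimitive_neg_one (x : ℝ) : chebWeightPrimitive x (-1) = 0 := by
  simp [chebWeightPrimitive, add_comm]

lemma one_sub_mul_add_sqrt_mul_sqrt_pos (hx : x ∈ Ioo (-1 : ℝ) 1) (hy : y ∈ Icc (-1 : ℝ) 1) :
    0 < 1 - x * y + √(1 - x ^ 2) * √(1 - y ^ 2) := by
  have hxy : |x * y| < 1 := by
    rw [abs_mul]
    exact mul_lt_one_of_nonneg_of_lt_one_left (abs_nonneg x) (abs_lt.2 hx) (abs_le.2 hy)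
  have : 0 < 1 - x * y := sub_pos.2 (lt_of_abs_lt hxy)
  positivity

lemma continuousOn_log_one_sub_mul_add_sqrt_mul_sqrt (hx : x ∈ Ioo (-1 : ℝ) 1) :
    ContinuousOn (fun y => log (1 - x * y + √(1 - x ^ 2) * √(1 - y ^ 2))) (Icc (-1) 1) :=
  ContinuousOn.log (by fun_prop) fun _ hy => (one_sub_mul_add_sqrt_mul_sqrt_pos hx hy).ne'

lemma continuousOn_chebWeightPrimitive (hx : x ∈ Ioo (-1 : ℝ) 1) :
    ContinuousOn (chebWeightPrimitive x) (Icc (-1) 1 \ {x}) :=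
  continuousOn_const.mul <|
    ((continuousOn_log_one_sub_mul_add_sqrt_mul_sqrt hx).mono sdiff_subset).sub <|
      ContinuousOn.log (by fun_prop) fun _ hy => sub_ne_zero.2 (Ne.symm hy.2)

lemma hasDerivAt_sqrt_one_sub_sq (hy : y ∈ Ioo (-1 : ℝ) 1) :
    HasDerivAt (fun y : ℝ => √(1 - y ^ 2)) (-y / √(1 - y ^ 2)) y := by
  have hpos : 0 < 1 - y ^ 2 := by nlinarith [hy.1, hy.2]
  refine (((hasDerivAt_pow 2 y).const_sub 1).sqrt hpos.ne').congr_deriv ?_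
  field_simp
  norm_num

lemma hasDerivAt_chebWeightPrimitive (hx : x ∈ Ioo (-1 : ℝ) 1) (hy : y ∈ Ioo (-1 : ℝ) 1)
    (hxy : x ≠ y) :
    HasDerivAt (chebWeightPrimitive x) (chebWeight y / (x - y)) y := by
  have hs : 0 < 1 - x ^ 2 := by nlinarith [hx.1, hx.2]
  have hr : 0 < 1 - y ^ 2 := by nlinarith [hy.1, hy.2]
  have hp := (one_sub_mul_add_sqrt_mul_sqrt_pos hx (Ioo_subset_Icc_self hy)).ne'
  have hxy' : x - y ≠ 0 := sub_ne_zero.2 hxy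
  have hderiv := (((((hasDerivAt_id' y).const_mul x).const_sub 1).fun_add
    ((hasDerivAt_sqrt_one_sub_sq hy).const_mul √(1 - x ^ 2))).log hp).fun_sub
    (((hasDerivAt_id' y).const_sub x).log hxy')
  refine (hderiv.const_mul (√(1 - x ^ 2))⁻¹).congr_deriv ?_
  rw [chebWeight, Real.sqrt_inv]
  have hs_sq := Real.sq_sqrt hs.le
  have hr_sq := Real.sq_sqrt hr.le
  have hs_pos := Real.sqrt_pos.2 hs
  have hr_pos := Real.sqrt_pos.2 hr
  set s := √(1 - x ^ 2)
  set r := √(1 - y ^ 2)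
  field_simp
  linear_combination s * hr_sq - r * hs_sq

lemma integral_chebWeight_div_sub (hx : x ∈ Ioo (-1 : ℝ) 1) (ha : -1 ≤ a) (hab : a ≤ b)
    (hb : b ≤ 1) (hxab : x ∉ Icc a b) :
    ∫ y in a..b, chebWeight y / (x - y) = chebWeightPrimitive x b - chebWeightPrimitive x a := by
  have hne : ∀ y ∈ Icc a b, x ≠ y := by
    rintro y hy rfl
    exact hxab hy
  have hcont : ContinuousOn (fun y => (x - y)⁻¹) (Icc a b) :=
    ContinuousOn.inv₀ (by fun_prop) fun y hy => sub_ne_zero.2 (hne y hy)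
  refine intervalIntegral.integral_eq_sub_of_hasDerivAt_of_le hab
    ((continuousOn_chebWeightPrimitive hx).mono fun y hy =>
      ⟨Icc_subset_Icc ha hb hy, (hne y hy).symm⟩)
    (fun y hy => hasDerivAt_chebWeightPrimitive hx (Ioo_subset_Ioo ha hb hy)
      (hne y (Ioo_subset_Icc_self hy))) ?_
  simpa only [div_eq_mul_inv] using
    integrable_chebWeight.intervalIntegrable.mul_continuousOn (by rwa [uIcc_of_le hab])

lemma tendsto_chebWeightPrimitive_sub (hx : x ∈ Ioo (-1 : ℝ) 1) :
    Tendsto (fun ε => chebWeightPrimitive x (x - ε) - chebWeightPrimitive x (x + ε))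
      (𝓝 0) (𝓝 0) := by
  have hcont := (continuousOn_log_one_sub_mul_add_sqrt_mul_sqrt hx).continuousAt
    (Icc_mem_nhds hx.1 hx.2)
  have hsub : Tendsto (fun ε => x - ε) (𝓝 0) (𝓝 x) :=
    Continuous.tendsto' (by fun_prop) _ _ (sub_zero x)
  have hadd : Tendsto (fun ε => x + ε) (𝓝 0) (𝓝 x) :=
    Continuous.tendsto' (by fun_prop) _ _ (add_zero x)
  have hlim := ((hcont.tendsto.comp hsub).sub (hcont.tendsto.comp hadd)).const_mul
    (√(1 - x ^ 2))⁻¹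
  rw [sub_self, mul_zero] at hlim
  refine hlim.congr fun ε => ?_
  -- The singular parts `log ε` and `log (-ε)` agree.
  simp only [chebWeightPrimitive, Function.comp_apply, sub_sub_cancel, sub_add_cancel_left,
    Real.log_neg_eq_log]
  ring

end ChebWeightPrimitive

section ChebyshevTransforms

variable {x : ℝ}

lemma hasHilbertTransform_chebWeight (hx : x ∈ Ioo (-1 : ℝ) 1) :
    HasHilbertTransform chebWeight x 0 := by
  have hlim := ((tendsto_chebWeightPrimitive_sub hx).mono_left
    (nhdsWithin_le_nhds (s := Ioi 0))).const_mul (1 / π)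
  rw [mul_zero] at hlim
  refine hlim.congr' ?_
  filter_upwards [Ioo_mem_nhdsGT (neg_lt_iff_pos_add.1 hx.1), Ioo_mem_nhdsGT (sub_pos.2 hx.2)]
    with ε ⟨hε, hleft⟩ ⟨_, hright⟩
  rw [setIntegral_lt_abs_sub_eq_add hε.le (by linarith : -1 ≤ x - ε) (by linarith : x + ε ≤ 1)
      (integrableOn_div_sub_of_integrable integrable_chebWeight hε)
      (fun y hy => by rw [chebWeight_eq_zero hy, zero_div]),
    integral_chebWeight_div_sub hx le_rfl (by linarith) (by linarith)
      (fun h => by linarith [h.2]),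
    integral_chebWeight_div_sub hx (by linarith) (by linarith) le_rfl
      (fun h => by linarith [h.1]),
    chebWeightPrimitive_one, chebWeightPrimitive_neg_one]
  ring

lemma chebT_zero (y : ℝ) : chebT 0 y = 1 := by simp [chebT]

lemma chebT_one (y : ℝ) : chebT 1 y = y := by simp [chebT]

lemma chebT_add_two (n : ℕ) (y : ℝ) :
    chebT (n + 2) y = 2 * (y * chebT (n + 1) y) - chebT n y := by
  simp [chebT, Polynomial.Chebyshev.T_add_two, mul_assoc]

lemma integrable_chebT_mul_chebWeight (n : ℕ) : Integrable fun y => chebT n y * chebWeight y :=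
  integrable_mul_chebWeight (Polynomial.continuousOn _)

lemma integral_chebT_mul_chebWeight_zero : ∫ y, chebT 0 y * chebWeight y = π :=
  (integral_mul_chebWeight _).trans Polynomial.Chebyshev.integral_eval_T_real_measureT_zero

lemma integral_chebT_mul_chebWeight_of_ne_zero {n : ℕ} (hn : n ≠ 0) :
    ∫ y, chebT n y * chebWeight y = 0 :=
  (integral_mul_chebWeight _).trans <|
    Polynomial.Chebyshev.integral_eval_T_real_measureT_of_ne_zero (Nat.cast_ne_zero.2 hn)

lemma hasHilbertTransform_chebT_mul_chebWeight (hx : x ∈ Ioo (-1 : ℝ) 1) (n : ℕ) :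
    HasHilbertTransform (fun y => chebT n y * chebWeight y) x
      (-(Polynomial.Chebyshev.U ℝ (n - 1)).eval x) := by
  have h_zero : HasHilbertTransform (fun y => chebT 0 y * chebWeight y) x 0 := by
    simpa only [chebT_zero, one_mul] using hasHilbertTransform_chebWeight hx
  induction n using Nat.twoStepInduction with
  | zero => simpa using h_zero
  | one =>
    have h := h_zero.id_mul (integrable_chebT_mul_chebWeight 0)
    rw [integral_chebT_mul_chebWeight_zero, one_div_mul_cancel Real.pi_ne_zero] at h
    simpa [chebT_zero, chebT_one] using h
  | more n ih ih' =>
    have hT := integrable_chebT_mul_chebWeight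
    have hyT : Integrable fun y => y * (chebT (n + 1) y * chebWeight y) := by
      simpa only [mul_assoc] using integrable_mul_chebWeight
        (f := fun y => y * chebT (n + 1) y) (continuousOn_id.mul (Polynomial.continuousOn _))
    have h := ((ih'.id_mul (hT (n + 1))).const_mul 2).sub ih (hyT.const_mul 2) (hT n)
    rw [integral_chebT_mul_chebWeight_of_ne_zero n.succ_ne_zero] at h
    convert! h using 1
    · funext y
      rw [chebT_add_two]
      ring
    · have hU := congrArg (Polynomial.eval x) (Polynomial.Chebyshev.U_add_one ℝ n)
      simp only [Polynomial.eval_sub, Polynomial.eval_mul, Polynomial.eval_ofNat,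
        Polynomial.eval_X] at hU
      push_cast
      rw [show (n : ℤ) + 2 - 1 = n + 1 by ring, add_sub_cancel_right, hU]
      ring

lemma sqrt_one_sub_sq_mul_chebU (n : ℕ) (y : ℝ) :
    √(1 - y ^ 2) * chebU n y =
      1 / 2 * (chebT n y * chebWeight y - chebT (n + 2) y * chebWeight y) := by
  have hU := congrArg (Polynomial.eval y)
    (Polynomial.Chebyshev.one_sub_X_sq_mul_U_eq_pol_in_T ℝ n)
  simp only [Polynomial.eval_sub, Polynomial.eval_mul, Polynomial.eval_pow, Polynomial.eval_X,
    Polynomial.eval_one] at hU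
  have hT := chebT_add_two n y
  rw [← one_sub_sq_mul_chebWeight]
  simp only [chebT, chebU] at hT ⊢
  push_cast at hT ⊢
  linear_combination chebWeight y * (hU - hT / 2)

lemma hasHilbertTransform_sqrt_one_sub_sq_mul_chebU (hx : x ∈ Ioo (-1 : ℝ) 1) (n : ℕ) :
    HasHilbertTransform (fun y => √(1 - y ^ 2) * chebU n y) x (chebT (n + 1) x) := by
  have h := ((hasHilbertTransform_chebT_mul_chebWeight hx n).sub
    (hasHilbertTransform_chebT_mul_chebWeight hx (n + 2)) (integrable_chebT_mul_chebWeight n)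
    (integrable_chebT_mul_chebWeight (n + 2))).const_mul (1 / 2)
  have hT := congrArg (Polynomial.eval x)
    (Polynomial.Chebyshev.two_mul_T_eq_U_sub_U ℝ ((n : ℤ) - 1))
  simp only [Polynomial.eval_sub, Polynomial.eval_mul, Polynomial.eval_ofNat] at hT
  convert! h using 1
  · funext y
    exact sqrt_one_sub_sq_mul_chebU n y
  · rw [chebT]
    push_cast
    rw [show (n : ℤ) - 1 + 2 = n + 1 by ring] at hT
    rw [show (n : ℤ) + 2 - 1 = n + 1 by ring]
    linear_combination hT / 2

end ChebyshevTransforms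

/-- For every `n ≥ 1` and `x ∈ (-1,1)`,
`(1/π) p.v. ∫_{-1}^{1} √(1−y²)·U_{n−1}(y)/(x−y) dy = T_n(x)`. -/
theorem chebyshev_pv_integral_second_kind (n : ℕ) (hn : 1 ≤ n)
    (x : ℝ) (hx : x ∈ Set.Ioo (-1 : ℝ) 1) :
    Tendsto
      (fun ε : ℝ => (1 / π) *
        ∫ y in Set.Ioo (-1 : ℝ) 1 ∩ {y : ℝ | ε < |x - y|},
          Real.sqrt (1 - y ^ 2) * chebU (n - 1) y / (x - y))
      (𝓝[>] 0) (𝓝 (chebT n x)) := by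
  have htransform := hasHilbertTransform_sqrt_one_sub_sq_mul_chebU hx (n - 1)
  rw [Nat.sub_add_cancel hn] at htransform
  refine htransform.congr fun ε => ?_
  congr 1
  refine setIntegral_eq_of_subset_of_forall_sdiff_eq_zero (measurableSet_lt_abs_sub x ε)
    inter_subset_right fun y hy => ?_
  have hy_out : y ∉ Ioo (-1 : ℝ) 1 := fun h => hy.2 ⟨h, hy.1⟩
  simp only [← one_sub_sq_mul_chebWeight, chebWeight_eq_zero hy_out, mul_zero, zero_mul, zero_div]
end

section
/- For every x ∈ (-1,1), the principal-value integral p.v. ∫_{-1}^{1} 1 / ((x−y)·√(1−y²)) dy equals 0. Consequently, for any constant c > 0, the arcsine density u(x) = c/√(1−x²) on (-1,1) has vanishing Hilbert transform Hu(x) = 0 for all x ∈ (-1,1), so that arctan(Hu(x)/u(x)) is identically 0 on (-1,1) and u is a stationary solution of the transport equation u_t + (1/π)(arctan(Hu/u))_x = 0 on (-1,1). -/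
open MeasureTheory Real Filter Topology Set

/-!
Writing `x = cos α` and `y = cos β` turns `dy / ((x - y) √(1 - y²))` into `-dβ / (cos α - cos β)`,
which has the primitive `(log (1 - cos (α + β)) - log |x - y|) / sin α`. It vanishes at both
endpoints `y = ±1`, and its singular part `log |x - y|` is even about `x`, so it cancels between
`x - ε` and `x + ε`; the rest is continuous at `x`, and the principal value is `0`.
-/

section PrincipalValue

lemma Ioo_inter_setOf_lt_abs_sub {G : Type*} [AddCommGroup G] [LinearOrder G]
    [IsOrderedAddMonoid G] {a b x ε : G} (hε : 0 ≤ ε) (ha : a ≤ x) (hb : x ≤ b) :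
    Ioo a b ∩ {y | ε < |x - y|} = Ioo a (x - ε) ∪ Ioo (x + ε) b := by
  have hleft : x - ε ≤ x := sub_le_self x hε
  have hright : x ≤ x + ε := le_add_of_nonneg_right hε
  ext y
  simp only [mem_inter_iff, mem_Ioo, mem_ofPred_eq, mem_union, lt_abs, neg_sub,
    lt_sub_comm (a := ε) (b := x), lt_sub_iff_add_lt' (a := x)]
  constructor
  · rintro ⟨⟨hay, hyb⟩, h | h⟩
    · exact Or.inl ⟨hay, h⟩
    · exact Or.inr ⟨h, hyb⟩
  · rintro (⟨hay, h⟩ | ⟨h, hyb⟩)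
    · exact ⟨⟨hay, h.trans_le (hleft.trans hb)⟩, Or.inl h⟩
    · exact ⟨⟨(ha.trans hright).trans_lt h, hyb⟩, Or.inr h⟩

lemma integrableOn_div_sub_inter_setOf_lt_norm_sub {𝕜 : Type*} [RCLike 𝕜] {μ : Measure 𝕜}
    {f : 𝕜 → 𝕜} {s : Set 𝕜} {ε : ℝ} (hf : IntegrableOn f s μ) (hε : 0 < ε) (x : 𝕜) :
    IntegrableOn (fun y => f y / (x - y)) (s ∩ {y | ε < ‖x - y‖}) μ := by
  have hbound : ∀ᵐ y ∂μ.restrict (s ∩ {y | ε < ‖x - y‖}), ‖(x - y)⁻¹‖ ≤ ε⁻¹ := by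
    have hmeas : MeasurableSet {y | ε < ‖x - y‖} := measurableSet_lt (by fun_prop) (by fun_prop)
    filter_upwards [ae_restrict_of_ae_restrict_of_subset (s := s ∩ {y | ε < ‖x - y‖})
      inter_subset_right (ae_restrict_mem hmeas)] with y hy
    rw [norm_inv]
    exact inv_anti₀ hε (le_of_lt hy)
  simpa only [div_eq_mul_inv, mul_comm] using!
    (hf.mono_set inter_subset_left).bdd_mul (by fun_prop) hbound

variable {E : Type*} [NormedAddCommGroup E] [NormedSpace ℝ E]

lemma setIntegral_Ioo_eq_sub_of_hasDerivAt [CompleteSpace E] {f F : ℝ → E} {a b : ℝ} (hab : a ≤ b)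
    (hcont : ContinuousOn F (Icc a b)) (hderiv : ∀ y ∈ Ioo a b, HasDerivAt F (f y) y)
    (hint : IntegrableOn f (Ioo a b)) : ∫ y in Ioo a b, f y = F b - F a := by
  rw [← integral_Ioc_eq_integral_Ioo, ← intervalIntegral.integral_of_le hab]
  exact intervalIntegral.integral_eq_sub_of_hasDerivAt_of_le hab hcont hderiv
    ((intervalIntegrable_iff_integrableOn_Ioo_of_le hab).2 hint)

variable [CompleteSpace E] {f F : ℝ → E} {a b x : ℝ}

lemma setIntegral_Ioo_inter_setOf_lt_abs_sub {ε : ℝ} (hε : 0 < ε) (ha : a ≤ x - ε)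
    (hb : x + ε ≤ b) (hcont : ContinuousOn F (Icc a b \ {x}))
    (hderiv : ∀ y ∈ Ioo a b \ {x}, HasDerivAt F (f y) y)
    (hint : IntegrableOn f (Ioo a b ∩ {y | ε < |x - y|})) :
    ∫ y in Ioo a b ∩ {y | ε < |x - y|}, f y = F b - F a + (F (x - ε) - F (x + ε)) := by
  rw [Ioo_inter_setOf_lt_abs_sub hε.le (by linarith) (by linarith)] at hint ⊢
  have hleft : ∫ y in Ioo a (x - ε), f y = F (x - ε) - F a :=
    setIntegral_Ioo_eq_sub_of_hasDerivAt ha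
      (hcont.mono fun y hy => ⟨⟨hy.1, by linarith [hy.2]⟩, ne_of_lt (by linarith [hy.2])⟩)
      (fun y hy => hderiv y ⟨⟨hy.1, by linarith [hy.2]⟩, ne_of_lt (by linarith [hy.2])⟩)
      hint.left_of_union
  have hright : ∫ y in Ioo (x + ε) b, f y = F b - F (x + ε) :=
    setIntegral_Ioo_eq_sub_of_hasDerivAt hb
      (hcont.mono fun y hy => ⟨⟨by linarith [hy.1], hy.2⟩, ne_of_gt (by linarith [hy.1])⟩)
      (fun y hy => hderiv y ⟨⟨by linarith [hy.1], hy.2⟩, ne_of_gt (by linarith [hy.1])⟩)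
      hint.right_of_union
  have hdisj : Disjoint (Ioo a (x - ε)) (Ioo (x + ε) b) :=
    Set.disjoint_left.2 fun y hl hr => by linarith [hl.2, hr.1]
  rw [setIntegral_union hdisj measurableSet_Ioo hint.left_of_union hint.right_of_union,
    hleft, hright]
  abel

theorem tendsto_setIntegral_Ioo_inter_setOf_lt_abs_sub {l : E} (hx : x ∈ Ioo a b)
    (hcont : ContinuousOn F (Icc a b \ {x}))
    (hderiv : ∀ y ∈ Ioo a b \ {x}, HasDerivAt F (f y) y)
    (hint : ∀ ε > 0, IntegrableOn f (Ioo a b ∩ {y | ε < |x - y|}))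
    (hlim : Tendsto (fun ε => F (x - ε) - F (x + ε)) (𝓝[>] 0) (𝓝 l)) :
    Tendsto (fun ε => ∫ y in Ioo a b ∩ {y | ε < |x - y|}, f y) (𝓝[>] 0)
      (𝓝 (F b - F a + l)) := by
  refine (hlim.const_add (F b - F a)).congr' ?_
  filter_upwards [Ioo_mem_nhdsGT (sub_pos.2 hx.1), Ioo_mem_nhdsGT (sub_pos.2 hx.2)] with ε ha hb
  exact (setIntegral_Ioo_inter_setOf_lt_abs_sub ha.1 (by linarith [ha.2]) (by linarith [hb.2])
    hcont hderiv (hint ε ha.1)).symm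

end PrincipalValue

section ArcsineKernel

variable {x y : ℝ}

lemma cos_arccos_add_arccos_lt_one (hx : x ∈ Ioo (-1 : ℝ) 1) (y : ℝ) :
    cos (arccos x + arccos y) < 1 := by
  have hα : 0 < arccos x := arccos_pos.2 hx.2
  have hα' : arccos x < π := arccos_lt_pi.2 hx.1
  have hβ := arccos_nonneg y
  have hβ' := arccos_le_pi y
  refine (cos_le_one _).lt_of_ne fun h => ?_
  have := (cos_eq_one_iff_of_lt_of_lt (by linarith) (by linarith)).1 h
  linarith

/-- A primitive of the kernel `y ↦ 1 / ((x - y) √(1 - y²))` on each side of `x`. The argument of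
`log (x - y)` may be negative: `Real.log` is `log |·|`. -/
noncomputable def arcsineKernelPrimitive (x y : ℝ) : ℝ :=
  (log (1 - cos (arccos x + arccos y)) - log (x - y)) / √(1 - x ^ 2)

lemma arcsineKernelPrimitive_one (hx : x ∈ Icc (-1 : ℝ) 1) : arcsineKernelPrimitive x 1 = 0 := by
  rw [arcsineKernelPrimitive, arccos_one, add_zero, cos_arccos hx.1 hx.2, ← neg_sub x 1,
    log_neg_eq_log, sub_self, zero_div]

lemma arcsineKernelPrimitive_neg_one (hx : x ∈ Icc (-1 : ℝ) 1) :
    arcsineKernelPrimitive x (-1) = 0 := by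
  rw [arcsineKernelPrimitive, arccos_neg_one, cos_add_pi, cos_arccos hx.1 hx.2,
    sub_neg_eq_add, sub_neg_eq_add, add_comm, sub_self, zero_div]

lemma continuous_log_one_sub_cos_arccos_add_arccos (hx : x ∈ Ioo (-1 : ℝ) 1) :
    Continuous fun y => log (1 - cos (arccos x + arccos y)) :=
  Continuous.log (by fun_prop) fun y => (sub_pos.2 (cos_arccos_add_arccos_lt_one hx y)).ne'

lemma continuousOn_arcsineKernelPrimitive (hx : x ∈ Ioo (-1 : ℝ) 1) :
    ContinuousOn (arcsineKernelPrimitive x) {x}ᶜ := by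
  have hsing : ContinuousOn (fun y => log (x - y)) {x}ᶜ :=
    ContinuousOn.log (by fun_prop) fun y hy => sub_ne_zero.2 (Ne.symm hy)
  exact ((continuous_log_one_sub_cos_arccos_add_arccos hx).continuousOn.sub hsing).div_const _

lemma tendsto_arcsineKernelPrimitive_sub (hx : x ∈ Ioo (-1 : ℝ) 1) :
    Tendsto (fun ε => arcsineKernelPrimitive x (x - ε) - arcsineKernelPrimitive x (x + ε))
      (𝓝 0) (𝓝 0) := by
  set g : ℝ → ℝ := fun y => log (1 - cos (arccos x + arccos y)) with hg
  have hcancel (ε : ℝ) : arcsineKernelPrimitive x (x - ε) - arcsineKernelPrimitive x (x + ε) =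
      (g (x - ε) - g (x + ε)) / √(1 - x ^ 2) := by
    simp only [arcsineKernelPrimitive, hg, sub_sub_cancel, sub_add_cancel_left, log_neg_eq_log]
    ring
  have hcont : Continuous g := continuous_log_one_sub_cos_arccos_add_arccos hx
  simp_rw [hcancel]
  exact Continuous.tendsto' (by fun_prop) 0 0 (by simp)

lemma sqrt_mul_one_sub_cos_arccos_add_arccos (hx : x ∈ Icc (-1 : ℝ) 1) (hy : y ∈ Icc (-1 : ℝ) 1) :
    √(1 - x ^ 2) * (1 - cos (arccos x + arccos y)) =
      √(1 - y ^ 2) * (1 - cos (arccos x + arccos y)) - (x - y) * sin (arccos x + arccos y) := by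
  have hsx : √(1 - x ^ 2) ^ 2 = 1 - x ^ 2 := sq_sqrt (by nlinarith [hx.1, hx.2])
  have hsy : √(1 - y ^ 2) ^ 2 = 1 - y ^ 2 := sq_sqrt (by nlinarith [hy.1, hy.2])
  rw [cos_add, sin_add, cos_arccos hx.1 hx.2, cos_arccos hy.1 hy.2, sin_arccos, sin_arccos]
  linear_combination √(1 - y ^ 2) * hsx - √(1 - x ^ 2) * hsy

lemma hasDerivAt_arcsineKernelPrimitive (hx : x ∈ Ioo (-1 : ℝ) 1) (hy : y ∈ Ioo (-1 : ℝ) 1)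
    (hxy : x ≠ y) :
    HasDerivAt (arcsineKernelPrimitive x) (1 / ((x - y) * √(1 - y ^ 2))) y := by
  have hcos : 1 - cos (arccos x + arccos y) ≠ 0 :=
    (sub_pos.2 (cos_arccos_add_arccos_lt_one hx y)).ne'
  have hsub : x - y ≠ 0 := sub_ne_zero.2 hxy
  have hsx : √(1 - x ^ 2) ≠ 0 := (sqrt_pos.2 (by nlinarith [hx.1, hx.2])).ne'
  have hsy : √(1 - y ^ 2) ≠ 0 := (sqrt_pos.2 (by nlinarith [hy.1, hy.2])).ne'
  have hregular := ((((hasDerivAt_arccos hy.1.ne' hy.2.ne).const_add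
    (arccos x)).cos).const_sub 1).log hcos
  have hsingular := ((hasDerivAt_id y).const_sub x).log hsub
  refine ((hregular.sub hsingular).div_const √(1 - x ^ 2)).congr_deriv ?_
  have hkey := sqrt_mul_one_sub_cos_arccos_add_arccos (Ioo_subset_Icc_self hx)
    (Ioo_subset_Icc_self hy)
  simp only [id_eq]
  field_simp
  linear_combination -hkey

lemma integrableOn_arcsineKernel {ε : ℝ} (hε : 0 < ε) (x : ℝ) :
    IntegrableOn (fun y => 1 / ((x - y) * √(1 - y ^ 2)))
      (Ioo (-1 : ℝ) 1 ∩ {y | ε < |x - y|}) := by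
  have hdensity : IntegrableOn (fun y : ℝ => √(1 - y ^ 2)⁻¹) (Ioo (-1) 1) :=
    (intervalIntegrable_iff_integrableOn_Ioo_of_le (by norm_num)).1
      Polynomial.Chebyshev.intervalIntegrable_sqrt_one_sub_sq_inv
  refine (integrableOn_div_sub_inter_setOf_lt_norm_sub hdensity hε x).congr_fun_ae ?_
  exact .of_forall fun y => by simp only [sqrt_inv, mul_inv_rev, div_eq_mul_inv, one_mul]

theorem tendsto_principalValue_arcsineKernel (hx : x ∈ Ioo (-1 : ℝ) 1) :
    Tendsto (fun ε : ℝ => ∫ y in Ioo (-1 : ℝ) 1 ∩ {y | ε < |x - y|},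
      1 / ((x - y) * √(1 - y ^ 2))) (𝓝[>] 0) (𝓝 0) := by
  have h := tendsto_setIntegral_Ioo_inter_setOf_lt_abs_sub hx
    ((continuousOn_arcsineKernelPrimitive hx).mono fun _ hy => hy.2)
    (fun y hy => hasDerivAt_arcsineKernelPrimitive hx hy.1 (Ne.symm hy.2))
    (fun ε hε => integrableOn_arcsineKernel hε x)
    ((tendsto_arcsineKernelPrimitive_sub hx).mono_left nhdsWithin_le_nhds)
  have hx' := Ioo_subset_Icc_self hx
  simpa only [arcsineKernelPrimitive_one hx', arcsineKernelPrimitive_neg_one hx', sub_self,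
    add_zero] using h

end ArcsineKernel

section HilbertTransform

lemma hasHilbertTransform_indicator_iff {s : Set ℝ} (hs : MeasurableSet s) {f : ℝ → ℝ} {x L : ℝ} :
    HasHilbertTransform (s.indicator f) x L ↔
      Tendsto (fun ε : ℝ => (1 / π) * ∫ y in s ∩ {y | ε < |x - y|}, f y / (x - y))
        (𝓝[>] 0) (𝓝 L) := by
  have hdiv : (fun y => s.indicator f y / (x - y)) = s.indicator fun y => f y / (x - y) := by
    ext y
    by_cases hy : y ∈ s <;> simp [hy]
  simp only [HasHilbertTransform, hdiv, setIntegral_indicator hs, inter_comm]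

theorem hasHilbertTransform_arcsine (c : ℝ) {x : ℝ} (hx : x ∈ Ioo (-1 : ℝ) 1) :
    HasHilbertTransform ((Ioo (-1 : ℝ) 1).indicator fun y => c / √(1 - y ^ 2)) x 0 := by
  have hkernel (y : ℝ) : c / √(1 - y ^ 2) / (x - y) = c * (1 / ((x - y) * √(1 - y ^ 2))) := by
    rw [div_div, mul_comm (√(1 - y ^ 2)), mul_one_div]
  simp_rw [hasHilbertTransform_indicator_iff measurableSet_Ioo, hkernel, integral_const_mul]
  simpa only [mul_zero] using
    ((tendsto_principalValue_arcsineKernel hx).const_mul c).const_mul (1 / π)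

end HilbertTransform

/-- For every `x ∈ (-1,1)`, `p.v. ∫_{-1}^{1} 1/((x−y)·√(1−y²)) dy = 0`; consequently
for every `c > 0` the arcsine density `u(y) = c/√(1−y²)` on `(-1,1)` has vanishing
Hilbert transform on `(-1,1)`, `arctan(Hu/u)` is identically `0` there, and `u` is a
stationary solution of `u_t + (1/π)(arctan(Hu/u))_x = 0` on `(-1,1)`. -/
theorem arcsine_stationary_solution :
    (∀ x ∈ Set.Ioo (-1 : ℝ) 1,
      Tendsto
        (fun ε : ℝ => ∫ y in Set.Ioo (-1 : ℝ) 1 ∩ {y : ℝ | ε < |x - y|},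
            1 / ((x - y) * Real.sqrt (1 - y ^ 2)))
        (𝓝[>] 0) (𝓝 0)) ∧
    ∀ c : ℝ, 0 < c →
      ∀ x ∈ Set.Ioo (-1 : ℝ) 1,
        HasHilbertTransform
          (Set.indicator (Set.Ioo (-1 : ℝ) 1) fun y => c / Real.sqrt (1 - y ^ 2)) x 0 ∧
        Real.arctan (0 / (c / Real.sqrt (1 - x ^ 2))) = 0 ∧
        -- stationarity: `u_t + (1/π)(arctan(Hu/u))_x = 0` with `u` time-independent
        -- and `Hu = 0` on `(-1,1)`:
        ∀ t : ℝ,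
          deriv (fun _ : ℝ =>
            Set.indicator (Set.Ioo (-1 : ℝ) 1) (fun y => c / Real.sqrt (1 - y ^ 2)) x) t +
          (1 / π) * deriv (fun y => Real.arctan ((0 : ℝ) /
            Set.indicator (Set.Ioo (-1 : ℝ) 1) (fun z => c / Real.sqrt (1 - z ^ 2)) y)) x = 0 := by
  refine ⟨fun x hx => tendsto_principalValue_arcsineKernel hx, fun c _ x hx =>
    ⟨hasHilbertTransform_arcsine c hx, ?_, fun t => ?_⟩⟩
  · rw [zero_div, arctan_zero]
  · simp only [zero_div, arctan_zero, deriv_const, mul_zero, add_zero]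
end

section
/- Fix c ≥ 0 and for 0 ≤ t < 1 define u_c(t,x) = v( (c+t)/(1−t), x/(1−t) ), where v(c',y) = √((x_+(c')−y)(y−x_−(c')))/(2πy)·χ_{(x_−(c'),x_+(c'))}(y) with x_±(c') = (√(c'+1) ± 1)². Then for every t ∈ [0,1) and every x in the support of u_c(t,·), i.e. every x with 2(2+c−t)x − (c+t)² − x² > 0, the time derivative satisfies ∂_t u_c(t,x) = − (c+t+x) / ( 2πx·√( 2(2+c−t)x − (c+t)² − x² ) ). -/
/-!
Expanding the product `(x₊ - y)(y - x₋)` gives the quadratic `2(c + 2)y - c² - y²`. Under the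
substitution `c ↦ (c + t)/(1 - t)`, `y ↦ x/(1 - t)` it becomes
`(2(2 + c - t)x - (c + t)² - x²)/(1 - t)²`, and the factor `1 - t` then cancels against the one in
the denominator of the density, so that only the radicand still depends on `t`. If the radicand is
positive at some `x`, then its discriminant `16(1 - t)(1 + c)` is positive; for `t < 1` this gives
`c > -1`, hence `√((c + s)/(1 - s) + 1)` is a genuine square root for all `s < 1`.
-/

open MeasureTheory Real Filter Topology Set

/-- Left edge `x_− = (√(c+1) − 1)²` of the Marchenko–Pastur distribution. -/
noncomputable def mpXm (c : ℝ) : ℝ := (Real.sqrt (c + 1) - 1) ^ 2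

/-- Right edge `x_+ = (√(c+1) + 1)²` of the Marchenko–Pastur distribution. -/
noncomputable def mpXp (c : ℝ) : ℝ := (Real.sqrt (c + 1) + 1) ^ 2

/-- Marchenko–Pastur density `v(c,y) = √((x_+−y)(y−x_−))/(2πy)` on `(x_−, x_+)`,
extended by `0` outside. -/
noncomputable def mpDensity (c : ℝ) (y : ℝ) : ℝ :=
  Set.indicator (Set.Ioo (mpXm c) (mpXp c))
    (fun z => Real.sqrt ((mpXp c - z) * (z - mpXm c)) / (2 * π * z)) y

theorem mpXm_le_mpXp (c : ℝ) : mpXm c ≤ mpXp c := by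
  unfold mpXm mpXp
  linarith [Real.sqrt_nonneg (c + 1)]

theorem mpXp_sub_mul_sub_mpXm {c : ℝ} (hc : -1 ≤ c) (y : ℝ) :
    (mpXp c - y) * (y - mpXm c) = 2 * (c + 2) * y - c ^ 2 - y ^ 2 := by
  have hsq : √(c + 1) ^ 2 = c + 1 := Real.sq_sqrt (by linarith)
  unfold mpXp mpXm
  linear_combination (2 * y - √(c + 1) ^ 2 + 1 - c) * hsq

/-- Outside `(x₋, x₊)` the radicand is nonpositive, so its `Real.sqrt` is `0`. -/
theorem mpDensity_eq_sqrt_div (c y : ℝ) :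
    mpDensity c y = √((mpXp c - y) * (y - mpXm c)) / (2 * π * y) := by
  unfold mpDensity
  by_cases hy : y ∈ Ioo (mpXm c) (mpXp c)
  · exact indicator_of_mem hy _
  · have hprod : (mpXp c - y) * (y - mpXm c) ≤ 0 := by
      by_contra! hpos
      rcases mul_pos_iff.1 hpos with ⟨hp, hm⟩ | ⟨hp, hm⟩
      · exact hy ⟨sub_pos.1 hm, sub_pos.1 hp⟩
      · linarith [mpXm_le_mpXp c]
    rw [indicator_of_notMem hy, Real.sqrt_eq_zero_of_nonpos hprod, zero_div]

theorem mpDensity_rescaled {c s : ℝ} (hc : -1 ≤ c) (hs : s < 1) (x : ℝ) :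
    mpDensity ((c + s) / (1 - s)) (x / (1 - s)) =
      √(2 * (2 + c - s) * x - (c + s) ^ 2 - x ^ 2) / (2 * π * x) := by
  have hs' : 0 < 1 - s := sub_pos.2 hs
  have hc' : -1 ≤ (c + s) / (1 - s) := by
    rw [le_div_iff₀ hs']
    linarith
  have hscale : 2 * ((c + s) / (1 - s) + 2) * (x / (1 - s)) - ((c + s) / (1 - s)) ^ 2 -
      (x / (1 - s)) ^ 2 = (2 * (2 + c - s) * x - (c + s) ^ 2 - x ^ 2) / (1 - s) ^ 2 := by
    field_simp
    ring
  rw [mpDensity_eq_sqrt_div, mpXp_sub_mul_sub_mpXm hc', hscale, Real.sqrt_div' _ (sq_nonneg _),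
    Real.sqrt_sq hs'.le, mul_div_assoc', div_div_div_cancel_right₀ hs'.ne']

theorem hasDerivAt_rescaled_radicand (c t x : ℝ) :
    HasDerivAt (fun s : ℝ => 2 * (2 + c - s) * x - (c + s) ^ 2 - x ^ 2)
      (-2 * (c + t + x)) t := by
  have hlin := (((hasDerivAt_id t).const_sub (2 + c)).const_mul 2).mul_const x
  have hsq := ((hasDerivAt_id t).const_add c).pow 2
  refine ((hlin.sub hsq).sub_const (x ^ 2)).congr_deriv ?_
  simp only [id, Nat.cast_ofNat]
  ring

theorem neg_one_lt_of_rescaled_radicand_pos {c t x : ℝ} (ht : t < 1)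
    (hx : 0 < 2 * (2 + c - t) * x - (c + t) ^ 2 - x ^ 2) : -1 < c := by
  have hdiscrim : 0 < 4 * (1 - t) * (1 + c) := by
    calc 0 < 2 * (2 + c - t) * x - (c + t) ^ 2 - x ^ 2 := hx
      _ = 4 * (1 - t) * (1 + c) - (x - (2 + c - t)) ^ 2 := by ring
      _ ≤ 4 * (1 - t) * (1 + c) := sub_le_self _ (sq_nonneg _)
  linarith [pos_of_mul_pos_right hdiscrim (by linarith)]

theorem marchenko_pastur_time_derivative_general {c t x : ℝ} (ht : t < 1)
    (hx : 0 < 2 * (2 + c - t) * x - (c + t) ^ 2 - x ^ 2) :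
    HasDerivAt (fun s : ℝ => mpDensity ((c + s) / (1 - s)) (x / (1 - s)))
      (-((c + t + x) /
        (2 * π * x * Real.sqrt (2 * (2 + c - t) * x - (c + t) ^ 2 - x ^ 2)))) t := by
  have hc : -1 ≤ c := (neg_one_lt_of_rescaled_radicand_pos ht hx).le
  have hformula : (fun s : ℝ => mpDensity ((c + s) / (1 - s)) (x / (1 - s))) =ᶠ[𝓝 t]
      fun s => √(2 * (2 + c - s) * x - (c + s) ^ 2 - x ^ 2) / (2 * π * x) := by
    filter_upwards [Iio_mem_nhds ht] with s hs using mpDensity_rescaled hc hs x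
  have hderiv := ((hasDerivAt_rescaled_radicand c t x).sqrt hx.ne').div_const (2 * π * x)
  refine (hderiv.congr_of_eventuallyEq hformula).congr_deriv ?_
  field_simp

/-- For the Marchenko–Pastur family `u_c(t,x) = v((c+t)/(1−t), x/(1−t))`, at every
`t ∈ [0,1)` and every `x` in the support (i.e. `2(2+c−t)x − (c+t)² − x² > 0`), the time
derivative satisfies `∂_t u_c(t,x) = −(c+t+x)/(2πx·√(2(2+c−t)x − (c+t)² − x²))`. -/
theorem marchenko_pastur_time_derivative (c : ℝ) (hc : 0 ≤ c)
    (t : ℝ) (ht : t ∈ Set.Ico (0 : ℝ) 1) (x : ℝ)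
    (hx : 0 < 2 * (2 + c - t) * x - (c + t) ^ 2 - x ^ 2) :
    HasDerivAt (fun s : ℝ => mpDensity ((c + s) / (1 - s)) (x / (1 - s)))
      (-((c + t + x) /
        (2 * π * x * Real.sqrt (2 * (2 + c - t) * x - (c + t) ^ 2 - x ^ 2)))) t :=
  marchenko_pastur_time_derivative_general ht.2 hx
end
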